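/- In the setting of the solvability of the range equation (ω ∈ ℝ^d nonresonant, f real analytic and 2π-periodic in each coordinate with mean f₀, g real analytic, g(c₀) = f₀, a := g'(c₀) ≠ 0), the solution u of the range equation can be chosen so that, in addition, for every fixed ζ with |ζ| < ζ̄ the map ε ↦ u(·, ε, ζ) is continuous from [0, ε̄) into the space of bounded continuous functions on ℝ^d with the supremum norm, with u(·, 0, ζ) = 0; in particular sup_{ψ∈ℝ^d} |u(ψ, ε, ζ)| → 0 as ε → 0⁺. -/

import Mathlib

open MeasureTheory Filter

namespace RangeEq

/-! ### The Nemytskii operator -/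

section Nemytskii

variable {K E : Type*} [TopologicalSpace K] [CompactSpace K] [NormedAddCommGroup E]
  [NormedSpace ℝ E]

/-- The `n`-th term of the power series of a Nemytskii operator. -/
noncomputable def nemTerm (K : Type*) [TopologicalSpace K] [CompactSpace K] {n : ℕ}
    (q : ContinuousMultilinearMap ℝ (fun _ : Fin n => E) ℝ) :
    ContinuousMultilinearMap ℝ (fun _ : Fin n => C(K, E)) C(K, ℝ) :=
  MultilinearMap.mkContinuous
    { toFun := fun v => ⟨fun θ => q (fun i => v i θ), by fun_prop⟩
      map_update_add' := by
        intro _ m i x y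
        ext θ
        have key : ∀ z : C(K, E), (fun j => (Function.update m i z) j θ)
            = Function.update (fun j => m j θ) i (z θ) := by
          intro z; funext j
          by_cases h : j = i
          · subst h; simp
          · simp [h]
        simp only [ContinuousMap.coe_mk, ContinuousMap.add_apply, key]
        simp
      map_update_smul' := by
        intro _ m i c x
        ext θ
        have key : ∀ z : C(K, E), (fun j => (Function.update m i z) j θ)
            = Function.update (fun j => m j θ) i (z θ) := by
          intro z; funext j
          by_cases h : j = i
          · subst h; simp
          · simp [h]
        simp only [ContinuousMap.coe_mk, ContinuousMap.smul_apply, key]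
        simp }
    ‖q‖
    (by
      intro m
      refine (ContinuousMap.norm_le _ (by positivity)).2 fun θ => ?_
      refine (q.le_opNorm _).trans ?_
      gcongr with i
      exact (m i).norm_coe_le_norm θ)

lemma nemTerm_apply {n : ℕ} (q : ContinuousMultilinearMap ℝ (fun _ : Fin n => E) ℝ)
    (v : Fin n → C(K, E)) (θ : K) : nemTerm K q v θ = q (fun i => v i θ) := rfl

lemma norm_nemTerm_le {n : ℕ} (q : ContinuousMultilinearMap ℝ (fun _ : Fin n => E) ℝ) :
    ‖nemTerm K q‖ ≤ ‖q‖ :=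
  MultilinearMap.mkContinuous_norm_le _ (norm_nonneg _) _

lemma nem_hasFPowerSeries (f : C(E, ℝ)) (p : FormalMultilinearSeries ℝ E ℝ) (x : E)
    (r : ENNReal) (h : HasFPowerSeriesOnBall f p x r) :
    HasFPowerSeriesOnBall (fun v : C(K, E) => f.comp v) (fun n => nemTerm K (p n))
      (ContinuousMap.const K x) r := by
  have hrad : p.radius ≤ FormalMultilinearSeries.radius
      (𝕜 := ℝ) (E := C(K, E)) (F := C(K, ℝ)) (fun n => nemTerm K (p n)) := by
    refine ENNReal.le_of_forall_nnreal_lt fun s hs => ?_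
    obtain ⟨C, -, hC⟩ := p.norm_mul_pow_le_of_lt_radius hs
    refine FormalMultilinearSeries.le_radius_of_bound _ C fun n => le_trans ?_ (hC n)
    gcongr
    exact norm_nemTerm_le _
  refine ⟨h.r_le.trans hrad, h.r_pos, ?_⟩
  intro y hy
  have hy' : y ∈ Metric.eball (0 : C(K, E)) (FormalMultilinearSeries.radius
      (𝕜 := ℝ) (E := C(K, E)) (F := C(K, ℝ)) (fun n => nemTerm K (p n))) :=
    Metric.eball_subset_eball (h.r_le.trans hrad) hy
  have hs := FormalMultilinearSeries.summable (𝕜 := ℝ) (E := C(K, E)) (F := C(K, ℝ))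
    (fun n => nemTerm K (p n)) hy'
  have hs2 := hs.hasSum
  convert hs2 using 1
  ext θ
  have h1 := ((ContinuousMap.evalCLM ℝ θ : C(K, ℝ) →L[ℝ] ℝ).hasSum hs2)
  have hyθ : y θ ∈ Metric.eball (0 : E) r := by
    rw [mem_eball_zero_iff] at hy ⊢
    refine lt_of_le_of_lt ?_ hy
    have := y.norm_coe_le_norm θ
    rw [← ofReal_norm, ← ofReal_norm]
    exact ENNReal.ofReal_le_ofReal this
  have h2 := h.hasSum hyθ
  exact h2.unique h1

lemma nem_analyticAt (f : C(E, ℝ)) (p : FormalMultilinearSeries ℝ E ℝ) (x : E)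
    (r : ENNReal) (h : HasFPowerSeriesOnBall f p x r) (w : C(K, E)) (η : ℝ) (hη : 0 ≤ η)
    (hηr : ENNReal.ofReal η < r) (hw : ∀ θ, ‖w θ - x‖ ≤ η) :
    AnalyticAt ℝ (fun v : C(K, E) => f.comp v) w := by
  refine (nem_hasFPowerSeries (K := K) f p x r h).analyticAt_of_mem ?_
  rw [Metric.mem_eball, edist_eq_enorm_sub, ← ofReal_norm]
  refine lt_of_le_of_lt (ENNReal.ofReal_le_ofReal ?_) hηr
  exact (ContinuousMap.norm_le _ hη).2 fun θ => by simpa using hw θ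

end Nemytskii

/-! ### The torus -/

section Torus

variable {d : ℕ}

/-- The `d`-dimensional torus. -/
abbrev TT (d : ℕ) : Type := UnitAddTorus (Fin d)

/-- The covering map of the torus, with period `2π`. -/
noncomputable def pr (x : Fin d → ℝ) : TT d := fun i => ((x i / (2 * Real.pi) : ℝ) : UnitAddCircle)

lemma pr_continuous : Continuous (pr (d := d)) := by
  unfold pr
  refine continuous_pi fun i => ?_
  exact (AddCircle.continuous_mk' 1).comp ((continuous_apply i).div_const _)

lemma pr_add (x y : Fin d → ℝ) : pr (x + y) = pr x + pr y := by
  funext i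
  simp [pr, add_div]

lemma pr_zero : pr (0 : Fin d → ℝ) = 0 := by
  funext i
  simp [pr]

lemma pr_quot : IsOpenQuotientMap (pr (d := d)) := by
  have h1 : IsOpenQuotientMap (fun t : ℝ => ((t / (2 * Real.pi) : ℝ) : UnitAddCircle)) := by
    have h2 : IsOpenQuotientMap (fun t : ℝ => (t : UnitAddCircle)) :=
      QuotientAddGroup.isOpenQuotientMap_mk
    have h3 : IsOpenQuotientMap (fun t : ℝ => t / (2 * Real.pi)) :=
      (Homeomorph.mulRight₀ (2 * Real.pi)⁻¹ (by positivity)).isOpenQuotientMap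
    exact h2.comp h3
  exact IsOpenQuotientMap.piMap (fun _ : Fin d => h1)

lemma pr_eq {x y : Fin d → ℝ} (h : pr x = pr y) :
    ∃ k : Fin d → ℤ, x = y + ∑ i, k i • Pi.single i (2 * Real.pi) := by
  have h1 : ∀ i, ∃ k : ℤ, x i = y i + k * (2 * Real.pi) := by
    intro i
    have := congrFun h i
    simp only [pr] at this
    rw [QuotientAddGroup.eq] at this
    obtain ⟨k, hk⟩ := AddSubgroup.mem_zmultiples_iff.1 this
    refine ⟨-k, ?_⟩
    have hpi : (2 * Real.pi) ≠ 0 := by positivity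
    simp only [zsmul_eq_mul, mul_one] at hk
    push_cast
    field_simp at hk
    linarith
  choose k hk using h1
  refine ⟨k, ?_⟩
  funext j
  rw [hk j]
  simp [Finset.sum_apply, Pi.single_apply]

lemma per_of_single {F : Type*} {f : (Fin d → ℝ) → F}
    (hf : ∀ (ψ : Fin d → ℝ) (i : Fin d), f (ψ + Pi.single i (2 * Real.pi)) = f ψ)
    {x y : Fin d → ℝ} (h : pr x = pr y) : f x = f y := by
  let H : AddSubgroup (Fin d → ℝ) :=
    { carrier := {v | ∀ ψ, f (ψ + v) = f ψ}
      zero_mem' := by intro ψ; simp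
      add_mem' := by
        intro a b ha hb ψ
        rw [← add_assoc, hb, ha]
      neg_mem' := by
        intro a ha ψ
        have := ha (ψ + -a)
        rw [← this]; simp }
  obtain ⟨k, rfl⟩ := pr_eq h
  have : ∑ i, k i • (Pi.single i (2 * Real.pi) : Fin d → ℝ) ∈ H :=
    H.sum_mem fun i _ => H.zsmul_mem (fun ψ => hf ψ i) _
  exact this y

lemma pr_single (ψ : Fin d → ℝ) (i : Fin d) : pr (ψ + Pi.single i (2 * Real.pi)) = pr ψ := by
  funext j
  by_cases h : j = i
  · subst h
    have hpi : (2 * Real.pi) ≠ 0 := by positivity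
    simp only [pr, Pi.add_apply, Pi.single_eq_same, add_div, div_self hpi]
    exact AddCircle.coe_add_period 1 _
  · simp [pr, h]

lemma exists_desc {F : Type*} [TopologicalSpace F] (f : (Fin d → ℝ) → F) (hc : Continuous f)
    (hf : ∀ (ψ : Fin d → ℝ) (i : Fin d), f (ψ + Pi.single i (2 * Real.pi)) = f ψ) :
    ∃ G : C(TT d, F), ∀ x, G (pr x) = f x := by
  let s := Function.surjInv (pr_quot (d := d)).surjective
  have hs : ∀ x, f (s (pr x)) = f x := fun x =>
    per_of_single hf (Function.surjInv_eq _ _)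
  refine ⟨⟨fun θ => f (s θ), ?_⟩, hs⟩
  refine (pr_quot (d := d)).isQuotientMap.continuous_iff.2 ?_
  have : (fun θ => f (s θ)) ∘ pr = f := funext hs
  rw [this]
  exact hc

/-- Translations. -/
noncomputable def tr (x : Fin d → ℝ) : C(TT d, ℝ) →L[ℝ] C(TT d, ℝ) :=
  LinearMap.mkContinuous
    { toFun := fun h => ⟨fun θ => h (θ + pr x), by fun_prop⟩
      map_add' := fun _ _ => rfl
      map_smul' := fun _ _ => rfl } 1
    (fun h => by
      rw [one_mul]
      exact (ContinuousMap.norm_le _ (norm_nonneg _)).2 fun _ => h.norm_coe_le_norm _)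

lemma tr_apply (x : Fin d → ℝ) (h : C(TT d, ℝ)) (θ : TT d) : tr x h θ = h (θ + pr x) := rfl

lemma tr_norm_le (x : Fin d → ℝ) (h : C(TT d, ℝ)) : ‖tr x h‖ ≤ ‖h‖ :=
  (ContinuousMap.norm_le _ (norm_nonneg _)).2 fun _ => h.norm_coe_le_norm _

lemma tr_continuous (h : C(TT d, ℝ)) : Continuous fun x => tr x h := by
  have : Continuous fun q : (Fin d → ℝ) × TT d => h (q.2 + pr q.1) :=
    h.continuous.comp (continuous_snd.add (pr_continuous.comp continuous_fst))
  exact (ContinuousMap.curry ⟨_, this⟩).continuous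


/-- Periodic truncated identity. -/
noncomputable def trunc (η t : ℝ) : ℝ := max (-η) (min η (Real.arcsin (Real.sin t)))

/-- Periodic bump. -/
noncomputable def bmp (η t : ℝ) : ℝ := max 0 (Real.cos t - Real.cos η)

lemma trunc_abs {η : ℝ} (hη : 0 < η) (t : ℝ) : |trunc η t| ≤ η := by
  unfold trunc
  rw [abs_le]
  refine ⟨le_max_left _ _, max_le (by linarith) (min_le_left _ _)⟩

lemma trunc_of_bmp {η : ℝ} (hη : 0 < η) (hη1 : η < Real.pi / 2) {t : ℝ} (hb : bmp η t ≠ 0) :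
    ∃ k : ℤ, trunc η t = t - k * (2 * Real.pi) := by
  have hpi := Real.pi_pos
  have hcos : Real.cos η < Real.cos t := by
    by_contra h
    push Not at h
    exact hb (max_eq_left (by linarith))
  set k : ℤ := round (t / (2 * Real.pi)) with hk
  refine ⟨k, ?_⟩
  have h1 := abs_sub_round (t / (2 * Real.pi))
  rw [← hk] at h1
  set t' := t - k * (2 * Real.pi) with ht'
  have h2 : |t'| ≤ Real.pi := by
    have : t' = (t / (2 * Real.pi) - k) * (2 * Real.pi) := by
      rw [ht']; field_simp
    rw [this, abs_mul, abs_of_pos (by positivity : 0 < 2 * Real.pi)]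
    nlinarith
  have hc : Real.cos t' = Real.cos t := Real.cos_sub_int_mul_two_pi t k
  have hs : Real.sin t' = Real.sin t := Real.sin_sub_int_mul_two_pi t k
  have h3 : |t'| < η := by
    by_contra h
    push Not at h
    have := Real.cos_le_cos_of_nonneg_of_le_pi hη.le h2 h
    rw [Real.cos_abs, hc] at this
    linarith
  obtain ⟨h4, h5⟩ := abs_lt.1 h3
  unfold trunc
  rw [← hs, Real.arcsin_sin (by linarith) (by linarith), min_eq_right h5.le, max_eq_right h4.le]

lemma trunc_per (η t : ℝ) : trunc η (t + 2 * Real.pi) = trunc η t := by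
  simp [trunc]

lemma bmp_per (η t : ℝ) : bmp η (t + 2 * Real.pi) = bmp η t := by
  simp [bmp]

lemma trunc_cont (η : ℝ) : Continuous (trunc η) := by
  unfold trunc
  have := Real.continuous_arcsin
  fun_prop

lemma bmp_cont (η : ℝ) : Continuous (bmp η) := by
  unfold bmp
  fun_prop

lemma local_piece (f : C((Fin d → ℝ), ℝ)) (x : Fin d → ℝ) (hf : AnalyticAt ℝ f x) :
    ∃ (W : C(TT d, Fin d → ℝ)) (χ : C(TT d, ℝ)), (∀ θ, 0 ≤ χ θ) ∧ 0 < χ (pr x) ∧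
      (∀ θ, χ θ ≠ 0 → pr (W θ) = θ) ∧
      AnalyticAt ℝ (fun ψ : Fin d → ℝ => f.comp (W + ContinuousMap.const (TT d) ψ)) 0 := by
  obtain ⟨p, r, hp⟩ := hf
  obtain ⟨η, hη, hη1, hηr⟩ : ∃ η : ℝ, 0 < η ∧ η < Real.pi / 2 ∧ ENNReal.ofReal η < r := by
    obtain ⟨s, hs0, hs⟩ := ENNReal.lt_iff_exists_nnreal_btwn.1 hp.r_pos
    have hs0' : (0 : ℝ) < s := by exact_mod_cast hs0
    refine ⟨min s 1, lt_min hs0' one_pos, ?_, ?_⟩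
    · have := Real.pi_gt_three
      have := min_le_right (s : ℝ) 1
      linarith
    · refine lt_of_le_of_lt (ENNReal.ofReal_le_ofReal (min_le_left _ _)) ?_
      simpa using hs
  have hsh : ∀ (ψ : Fin d → ℝ) (i j : Fin d),
      (ψ + Pi.single i (2 * Real.pi) : Fin d → ℝ) j - x j = ψ j - x j + 2 * Real.pi ∨
      (ψ + Pi.single i (2 * Real.pi) : Fin d → ℝ) j - x j = ψ j - x j := by
    intro ψ i j
    by_cases h : j = i
    · subst h; left; simp; ring
    · right; simp [h]
  obtain ⟨W, hW⟩ := exists_desc (d := d) (fun y => fun i => x i + trunc η (y i - x i))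
    (by have := trunc_cont η; fun_prop)
    (by
      intro ψ i; funext j
      rcases hsh ψ i j with h | h <;> simp only [h, trunc_per])
  obtain ⟨χ, hχ⟩ := exists_desc (d := d) (fun y => ∏ i, bmp η (y i - x i))
    (by have := bmp_cont η; fun_prop)
    (by
      intro ψ i
      refine Finset.prod_congr rfl fun j _ => ?_
      rcases hsh ψ i j with h | h <;> simp only [h, bmp_per])
  refine ⟨W, χ, ?_, ?_, ?_, ?_⟩
  · intro θ
    obtain ⟨y, rfl⟩ := pr_quot.surjective θ
    rw [hχ]
    exact Finset.prod_nonneg fun i _ => le_max_left _ _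
  · rw [hχ]
    refine Finset.prod_pos fun i _ => ?_
    have : Real.cos η < 1 := by
      rw [← Real.cos_zero]
      exact Real.cos_lt_cos_of_nonneg_of_le_pi le_rfl (by linarith [Real.pi_pos]) hη
    simp [bmp, this]
  · intro θ hθ
    obtain ⟨y, rfl⟩ := pr_quot.surjective θ
    rw [hχ, Finset.prod_ne_zero_iff] at hθ
    rw [hW]
    funext i
    obtain ⟨k, hk⟩ := trunc_of_bmp hη hη1 (hθ i (Finset.mem_univ i))
    simp only [pr, hk]
    rw [QuotientAddGroup.eq]
    refine AddSubgroup.mem_zmultiples_iff.2 ⟨k, ?_⟩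
    simp only [zsmul_eq_mul, mul_one]
    field_simp
    ring
  · have h1 : AnalyticAt ℝ (fun v : C(TT d, Fin d → ℝ) => f.comp v)
        (W + ContinuousMap.const (TT d) 0) := by
      refine nem_analyticAt f p x r hp _ η hη.le hηr fun θ => ?_
      obtain ⟨y, rfl⟩ := pr_quot.surjective θ
      refine (pi_norm_le_iff_of_nonneg hη.le).2 fun i => ?_
      simp only [ContinuousMap.add_apply, ContinuousMap.const_apply, hW]
      simpa using trunc_abs hη (y i - x i)
    let c : (Fin d → ℝ) →L[ℝ] C(TT d, Fin d → ℝ) :=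
      LinearMap.mkContinuous
        { toFun := fun ψ => ContinuousMap.const (TT d) ψ
          map_add' := fun _ _ => rfl
          map_smul' := fun _ _ => rfl } 1
        (fun h => by
          rw [one_mul]
          exact (ContinuousMap.norm_le _ (norm_nonneg _)).2 fun _ => le_rfl)
    have h2 : AnalyticAt ℝ (fun ψ : Fin d → ℝ => W + ContinuousMap.const (TT d) ψ) 0 :=
      analyticAt_const.add (c.analyticAt 0)
    exact AnalyticAt.comp_of_eq h1 h2 rfl

lemma tr_analyticAt (f : (Fin d → ℝ) → ℝ) (hf : ∀ x, AnalyticAt ℝ f x)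
    (F : C(TT d, ℝ)) (hF : ∀ x, F (pr x) = f x) :
    AnalyticAt ℝ (fun ψ : Fin d → ℝ => tr ψ F) 0 := by
  have hfc : Continuous f := continuous_iff_continuousAt.2 fun x => (hf x).continuousAt
  choose W χ hχ0 hχp hW hA using fun x => local_piece ⟨f, hfc⟩ x (hf x)
  obtain ⟨t, ht⟩ := isCompact_univ.elim_finite_subcover
    (fun x => {θ : TT d | 0 < χ x θ})
    (fun x => isOpen_lt continuous_const (χ x).continuous)
    (by
      intro θ _
      obtain ⟨y, rfl⟩ := pr_quot.surjective θ
      exact Set.mem_iUnion.2 ⟨y, hχp y⟩)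
  have hS : ∀ θ, 0 < ∑ j ∈ t, χ j θ := by
    intro θ
    have := ht (Set.mem_univ θ)
    simp only [Set.mem_iUnion] at this
    obtain ⟨j, hj, hθ⟩ := this
    exact Finset.sum_pos' (fun i _ => hχ0 i θ) ⟨j, hj, hθ⟩
  let Si : C(TT d, ℝ) := ⟨fun θ => (∑ j ∈ t, χ j θ)⁻¹,
    Continuous.inv₀ (by fun_prop) (fun θ => (hS θ).ne')⟩
  have key : (fun ψ : Fin d → ℝ => tr ψ F) = fun ψ => ∑ j ∈ t, (Si * χ j) *
      (ContinuousMap.comp ⟨f, hfc⟩ (W j + ContinuousMap.const (TT d) ψ)) := by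
    funext ψ
    ext θ
    rw [tr_apply]
    have h1 : ∀ j ∈ t, ((Si * χ j) *
      (ContinuousMap.comp ⟨f, hfc⟩ (W j + ContinuousMap.const (TT d) ψ))) θ
        = Si θ * χ j θ * F (θ + pr ψ) := by
      intro j _
      simp only [ContinuousMap.mul_apply, ContinuousMap.comp_apply, ContinuousMap.add_apply,
        ContinuousMap.const_apply, ContinuousMap.coe_mk]
      by_cases h : χ j θ = 0
      · simp [h]
      · rw [← hF, pr_add, hW j θ h]
    rw [ContinuousMap.sum_apply, Finset.sum_congr rfl h1, ← Finset.sum_mul, ← Finset.mul_sum]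
    have : Si θ * ∑ j ∈ t, χ j θ = 1 := inv_mul_cancel₀ (hS θ).ne'
    rw [this, one_mul]
  rw [key]
  exact Finset.analyticAt_fun_sum _ fun j _ => analyticAt_const.mul (hA j)

lemma laplace_hasDerivAt (k : ℝ → ℝ) (hk : Continuous k) (B : ℝ) (hB : ∀ t, ‖k t‖ ≤ B)
    {μ : ℝ} (hμ : 0 < μ) (t : ℝ) :
    HasDerivAt (fun t => ∫ s in Set.Ioi (0 : ℝ), Real.exp (-μ * s) * k (t + s))
      (μ * (∫ s in Set.Ioi (0 : ℝ), Real.exp (-μ * s) * k (t + s)) - k t) t := by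
  have hIntg : ∀ a : ℝ, IntegrableOn (fun r => Real.exp (-μ * r) * k r) (Set.Ioi a) := by
    intro a
    have := (exp_neg_integrableOn_Ioi a hμ).bdd_mul (f := k) (c := B)
      hk.aestronglyMeasurable (ae_of_all _ hB)
    refine this.congr (ae_of_all _ fun r => mul_comm _ _)
  have hcont : Continuous (fun r => Real.exp (-μ * r) * k r) := by fun_prop
  have h1 : ∀ t : ℝ, ∫ s in Set.Ioi (0 : ℝ), Real.exp (-μ * s) * k (t + s)
      = Real.exp (μ * t) * ((∫ r in Set.Ioi (0 : ℝ), Real.exp (-μ * r) * k r)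
        - ∫ r in (0 : ℝ)..t, Real.exp (-μ * r) * k r) := by
    intro t
    have h2 := (measurePreserving_add_left (volume : Measure ℝ) t).setIntegral_preimage_emb
      (measurableEmbedding_addLeft t) (fun r => Real.exp (-μ * r) * k r) (Set.Ioi t)
    have h3 : (fun x => t + x) ⁻¹' Set.Ioi t = Set.Ioi 0 := by
      ext x; simp
    rw [h3] at h2
    rw [← intervalIntegral.integral_Ioi_sub_Ioi' (hIntg 0) (hIntg t), sub_sub_cancel, ← h2,
      ← integral_const_mul]
    refine setIntegral_congr_fun measurableSet_Ioi fun s _ => ?_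
    rw [← mul_assoc, ← Real.exp_add]
    congr 2
    ring
  have h4 : HasDerivAt (fun t => ∫ r in (0 : ℝ)..t, Real.exp (-μ * r) * k r)
      (Real.exp (-μ * t) * k t) t :=
    intervalIntegral.integral_hasDerivAt_right (hcont.intervalIntegrable _ _)
      (hcont.stronglyMeasurableAtFilter _ _) hcont.continuousAt
  have h5 : HasDerivAt (fun t => Real.exp (μ * t)) (Real.exp (μ * t) * (μ * 1)) t :=
    ((hasDerivAt_id t).const_mul μ).exp
  have h6 := h5.mul (h4.const_sub (∫ r in Set.Ioi (0 : ℝ), Real.exp (-μ * r) * k r))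
  rw [funext h1]
  refine h6.congr_deriv ?_
  have h7 : Real.exp (μ * t) * Real.exp (-μ * t) = 1 := by
    rw [← Real.exp_add]; simp
  rw [h1 t]
  linear_combination (- k t) * h7

/-- Real trigonometric monomials. -/
noncomputable def rf (c : ℂ) (ν : Fin d → ℤ) : C(TT d, ℝ) :=
  ⟨fun θ => (c * UnitAddTorus.mFourier ν θ).re, by fun_prop⟩

lemma rf_apply (c : ℂ) (ν : Fin d → ℤ) (θ : TT d) :
    rf c ν θ = (c * UnitAddTorus.mFourier ν θ).re := rfl

lemma mFourier_shift (ν : Fin d → ℤ) (θ : TT d) (x : Fin d → ℝ) :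
    UnitAddTorus.mFourier ν (θ + pr x)
      = UnitAddTorus.mFourier ν θ * Complex.exp (Complex.I * (∑ i, x i * (ν i : ℝ) : ℝ)) := by
  have h1 : ∀ i, fourier (ν i) ((θ + pr x) i) = fourier (ν i) (θ i) *
      Complex.exp (Complex.I * ((x i * (ν i : ℝ) : ℝ) : ℂ)) := by
    intro i
    have : fourier (ν i) ((θ + pr x) i) = fourier (ν i) (θ i) * fourier (ν i) (pr x i) := by
      simp only [fourier_apply, Pi.add_apply, smul_add, AddCircle.toCircle_add, Circle.coe_mul]
    rw [this]
    congr 1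
    simp only [pr]
    rw [fourier_coe_apply]
    congr 1
    have hpi : (Real.pi : ℂ) ≠ 0 := by exact_mod_cast Real.pi_ne_zero
    push_cast
    field_simp
  simp only [UnitAddTorus.mFourier, ContinuousMap.coe_mk]
  rw [Finset.prod_congr rfl fun i _ => h1 i, Finset.prod_mul_distrib, ← Complex.exp_sum]
  congr 2
  rw [← Finset.mul_sum]
  push_cast
  rfl

lemma rf_norm_le (c : ℂ) (ν : Fin d → ℤ) : ‖rf c ν‖ ≤ ‖c‖ := by
  refine (ContinuousMap.norm_le _ (norm_nonneg _)).2 fun θ => ?_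
  rw [rf_apply, Real.norm_eq_abs]
  refine (Complex.abs_re_le_norm _).trans ?_
  rw [norm_mul]
  have := (UnitAddTorus.mFourier ν).norm_coe_le_norm θ
  rw [UnitAddTorus.mFourier_norm] at this
  nlinarith [norm_nonneg c]

lemma exists_laplace {μ : ℝ} (hμ : 0 < μ) (v : Fin d → ℝ) :
    ∃ A : C(TT d, ℝ) →L[ℝ] C(TT d, ℝ), ‖A‖ ≤ 1 / μ ∧
      (∀ h θ, A h θ = ∫ s in Set.Ioi (0 : ℝ), Real.exp (-μ * s) * h (θ + pr (s • v))) := by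
  have hIntg : ∀ h : C(TT d, ℝ), IntegrableOn (fun s : ℝ => Real.exp (-μ * s) • tr (s • v) h)
      (Set.Ioi 0) := by
    intro h
    have h1 := (exp_neg_integrableOn_Ioi 0 hμ)
    have hc : Continuous fun s : ℝ => tr (s • v) h :=
      (tr_continuous h).comp (by fun_prop)
    refine Integrable.mono' (h1.mul_const ‖h‖) ?_ (ae_of_all _ fun s => ?_)
    · exact Continuous.aestronglyMeasurable (by fun_prop)
    · rw [norm_smul, Real.norm_eq_abs, Real.abs_exp]
      gcongr
      exact tr_norm_le _ _
  let L : C(TT d, ℝ) →ₗ[ℝ] C(TT d, ℝ) :=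
    { toFun := fun h => ∫ s in Set.Ioi (0 : ℝ), Real.exp (-μ * s) • tr (s • v) h
      map_add' := by
        intro h1 h2
        rw [← integral_add (hIntg h1) (hIntg h2)]
        simp
      map_smul' := by
        intro c h
        rw [RingHom.id_apply, ← integral_smul]
        congr 1
        funext s
        rw [map_smul, smul_comm] }
  have hb : ∀ h, ‖L h‖ ≤ (1 / μ) * ‖h‖ := by
    intro h
    have h1 : ‖L h‖ ≤ ∫ s in Set.Ioi (0 : ℝ), Real.exp (-μ * s) * ‖h‖ := by
      refine norm_integral_le_of_norm_le ((exp_neg_integrableOn_Ioi 0 hμ).mul_const ‖h‖)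
        (ae_of_all _ fun s => ?_)
      rw [norm_smul, Real.norm_eq_abs, Real.abs_exp]
      gcongr
      exact tr_norm_le _ _
    rw [integral_mul_const, integral_exp_mul_Ioi (by linarith)] at h1
    simpa using h1
  refine ⟨L.mkContinuous _ hb, L.mkContinuous_norm_le (by positivity) hb, ?_⟩
  intro h θ
  have := (ContinuousMap.evalCLM ℝ θ : C(TT d, ℝ) →L[ℝ] ℝ).integral_comp_comm (hIntg h)
  exact this.symm

lemma laplace_rf {μ : ℝ} (hμ : 0 < μ) (v : Fin d → ℝ) (c : ℂ) (ν : Fin d → ℤ) (θ : TT d) :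
    ∫ s in Set.Ioi (0 : ℝ), Real.exp (-μ * s) * rf c ν (θ + pr (s • v))
      = rf (c / (μ - Complex.I * (∑ i, v i * (ν i : ℝ) : ℝ))) ν θ := by
  set σ : ℝ := ∑ i, v i * (ν i : ℝ) with hσ
  set a : ℂ := -μ + Complex.I * σ with ha
  have hare : a.re < 0 := by simp [ha, hμ]
  have h1 : ∀ s : ℝ, Real.exp (-μ * s) * rf c ν (θ + pr (s • v))
      = RCLike.re ((c * UnitAddTorus.mFourier ν θ) * Complex.exp (a * s)) := by
    intro s
    have : (∑ i, (s • v) i * (ν i : ℝ)) = s * σ := by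
      rw [hσ, Finset.mul_sum]
      refine Finset.sum_congr rfl fun i _ => ?_
      simp [mul_assoc]
    rw [rf_apply, mFourier_shift, this, RCLike.re_to_complex, ← Complex.re_ofReal_mul]
    congr 1
    have : Complex.exp (a * s) = (Real.exp (-μ * s) : ℝ) *
        Complex.exp (Complex.I * (s * σ : ℝ)) := by
      rw [Complex.ofReal_exp, ← Complex.exp_add]
      congr 1
      rw [ha]; push_cast; ring
    rw [this]; ring
  simp_rw [h1]
  rw [integral_re ((integrableOn_exp_mul_complex_Ioi hare 0).const_mul _), integral_const_mul,
    integral_exp_mul_complex_Ioi hare, rf_apply, RCLike.re_to_complex]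
  congr 1
  have hne : a ≠ 0 := by intro h; simp [h] at hare
  have hne2 : (μ - Complex.I * σ : ℂ) = -a := by rw [ha]; ring
  rw [hne2]
  simp
  field_simp

lemma exists_resolvent (ω : Fin d → ℝ) {l : ℝ} (hl : l ≠ 0) :
    ∃ J : C(TT d, ℝ) →L[ℝ] C(TT d, ℝ), ‖J‖ ≤ 1 / |l| ∧
      (∀ x h, J (tr x h) = tr x (J h)) ∧
      (∀ c ν, J (rf c ν) = rf (c / (Complex.I * (∑ i, ω i * (ν i : ℝ) : ℝ) - l)) ν) ∧
      (∀ h t, HasDerivAt (fun t : ℝ => J h (pr (t • ω)))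
        (h (pr (t • ω)) + l * J h (pr (t • ω))) t) := by
  rcases lt_or_gt_of_ne hl with hneg | hpos
  · obtain ⟨A, hA, hA2⟩ := exists_laplace (d := d) (μ := -l) (by linarith) (-ω)
    refine ⟨A, by rwa [abs_of_neg hneg], ?_, ?_, ?_⟩
    · intro x h
      ext θ
      rw [tr_apply, hA2, hA2]
      simp only [tr_apply, add_right_comm]
    · intro c ν
      ext θ
      rw [hA2, laplace_rf (by linarith)]
      congr 2
      simp only [Pi.neg_apply, neg_mul, Finset.sum_neg_distrib]
      push_cast
      ring
    · intro h t
      have h1 := laplace_hasDerivAt (fun r => h (pr ((-r) • ω)))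
        (h.continuous.comp (pr_continuous.comp (by fun_prop))) ‖h‖
        (fun r => h.norm_coe_le_norm _) (μ := -l) (by linarith) (-t)
      have h2 := h1.scomp t (hasDerivAt_neg t)
      have h3 : ∀ t : ℝ, A h (pr (t • ω)) = ∫ s in Set.Ioi (0 : ℝ),
          Real.exp (-(-l) * s) * h (pr ((-(-t + s)) • ω)) := by
        intro t
        rw [hA2]
        congr 1
        funext s
        rw [← pr_add]
        congr 3
        module
      have h4 : (fun t : ℝ => A h (pr (t • ω))) = (fun t => ∫ s in Set.Ioi (0 : ℝ),
          Real.exp (-(-l) * s) * h (pr ((-(t + s)) • ω))) ∘ Neg.neg := by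
        funext t; exact h3 t
      rw [h4]
      refine h2.congr_deriv ?_
      rw [h3 t]
      simp only [neg_neg, smul_eq_mul]
      ring
  · obtain ⟨A, hA, hA2⟩ := exists_laplace (d := d) (μ := l) hpos ω
    refine ⟨-A, by rwa [ContinuousLinearMap.opNorm_neg, abs_of_pos hpos], ?_, ?_, ?_⟩
    · intro x h
      ext θ
      simp only [_root_.neg_apply, map_neg, ContinuousMap.neg_apply]
      rw [tr_apply, hA2, hA2]
      simp only [tr_apply, add_right_comm]
    · intro c ν
      ext θ
      simp only [_root_.neg_apply, ContinuousMap.neg_apply]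
      rw [hA2, laplace_rf hpos, rf_apply, rf_apply, ← Complex.neg_re]
      congr 1
      rw [← neg_sub, div_neg]
      ring
    · intro h t
      have h1 := laplace_hasDerivAt (fun r => h (pr (r • ω)))
        (h.continuous.comp (pr_continuous.comp (by fun_prop))) ‖h‖
        (fun r => h.norm_coe_le_norm _) (μ := l) hpos t
      have h3 : ∀ t : ℝ, A h (pr (t • ω)) = ∫ s in Set.Ioi (0 : ℝ),
          Real.exp (-l * s) * h (pr ((t + s) • ω)) := by
        intro t
        rw [hA2]
        congr 1
        funext s
        rw [← pr_add, add_smul]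
      simp only [_root_.neg_apply, ContinuousMap.neg_apply, h3]
      refine h1.neg.congr_deriv ?_
      ring

lemma exists_M (ω : Fin d → ℝ) {a ε : ℝ} (ha : a ≠ 0) (hε : ε ≠ 0) (hεa : 4 * ε ^ 2 * a < 1) :
    ∃ M : C(TT d, ℝ) →L[ℝ] C(TT d, ℝ), ‖M‖ ≤ 1 / |a| ∧
      (∀ x h, M (tr x h) = tr x (M h)) ∧
      (∀ c ν, M (rf c ν) = rf (c * (ε / (Complex.I * (∑ i, ω i * (ν i : ℝ) : ℝ)
        + ε * (a - (∑ i, ω i * (ν i : ℝ) : ℝ) ^ 2)))) ν) ∧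
      (∀ h, ∃ y₁ y₂ : ℝ → ℝ, (∀ t, HasDerivAt (fun t : ℝ => M h (pr (t • ω))) (y₁ t) t) ∧
        (∀ t, HasDerivAt y₁ (y₂ t) t) ∧
        ∀ t, ε * y₂ t + y₁ t + ε * a * M h (pr (t • ω)) = ε * h (pr (t • ω))) := by
  obtain ⟨l₁, l₂, hs, hp⟩ : ∃ l₁ l₂ : ℝ, ε * (l₁ + l₂) = -1 ∧ l₁ * l₂ = a := by
    refine ⟨(-1 + √(1 - 4 * ε ^ 2 * a)) / (2 * ε), (-1 - √(1 - 4 * ε ^ 2 * a)) / (2 * ε), ?_, ?_⟩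
    · field_simp; ring
    · have := Real.sq_sqrt (show 0 ≤ 1 - 4 * ε ^ 2 * a by linarith)
      field_simp
      linear_combination -this
  have hl1 : l₁ ≠ 0 := by rintro rfl; simp at hp; exact ha hp.symm
  have hl2 : l₂ ≠ 0 := by rintro rfl; simp at hp; exact ha hp.symm
  obtain ⟨J₁, n1, c1, r1, d1⟩ := exists_resolvent ω hl1
  obtain ⟨J₂, n2, c2, r2, d2⟩ := exists_resolvent ω hl2
  refine ⟨J₁.comp J₂, ?_, ?_, ?_, ?_⟩
  · refine (J₁.opNorm_comp_le J₂).trans ?_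
    refine (mul_le_mul n1 n2 J₂.opNorm_nonneg (by positivity)).trans ?_
    rw [← hp, abs_mul]
    apply le_of_eq
    field_simp
  · intro x h
    simp only [ContinuousLinearMap.comp_apply, c1, c2]
  · intro c ν
    simp only [ContinuousLinearMap.comp_apply, r1, r2]
    set σ : ℝ := ∑ i, ω i * (ν i : ℝ)
    congr 1
    have hz : ∀ l : ℝ, l ≠ 0 → (Complex.I * σ - l : ℂ) ≠ 0 := by
      intro l hl h
      have := congrArg Complex.re h
      simp at this
      exact hl this
    have h1 := hz l₁ hl1
    have h2 := hz l₂ hl2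
    have hεc : (ε : ℂ) ≠ 0 := by exact_mod_cast hε
    have hs' : (ε : ℂ) * (l₁ + l₂) = -1 := by exact_mod_cast hs
    have hp' : (l₁ : ℂ) * l₂ = a := by exact_mod_cast hp
    have h3 : (Complex.I * σ + ε * (a - (σ : ℂ) ^ 2) : ℂ)
        = ε * ((Complex.I * σ - l₁) * (Complex.I * σ - l₂)) := by
      linear_combination (Complex.I * σ) * hs' - ε * hp' - (ε * (σ : ℂ) ^ 2) * Complex.I_sq
    rw [h3]
    field_simp
  · intro h
    refine ⟨fun t => J₂ h (pr (t • ω)) + l₁ * J₁ (J₂ h) (pr (t • ω)),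
      fun t => (h (pr (t • ω)) + l₂ * J₂ h (pr (t • ω)))
        + l₁ * (J₂ h (pr (t • ω)) + l₁ * J₁ (J₂ h) (pr (t • ω))), ?_, ?_, ?_⟩
    · intro t
      exact d1 (J₂ h) t
    · intro t
      exact (d2 h t).add ((d1 (J₂ h) t).const_mul l₁)
    · intro t
      simp only [ContinuousLinearMap.comp_apply]
      rw [← hp]
      linear_combination (J₂ h (pr (t • ω)) + l₁ * J₁ (J₂ h) (pr (t • ω))) * hs

lemma rf_zero (c : ℂ) : rf c (0 : Fin d → ℤ) = ContinuousMap.const (TT d) c.re := by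
  ext θ
  rw [rf_apply, UnitAddTorus.mFourier_zero]
  simp

lemma rf_continuous (ν : Fin d → ℤ) : Continuous fun c => rf c ν := by
  have : LipschitzWith 1 fun c => rf c ν := by
    refine LipschitzWith.of_dist_le_mul fun c c' => ?_
    rw [dist_eq_norm, dist_eq_norm, NNReal.coe_one, one_mul]
    have : rf c ν - rf c' ν = rf (c - c') ν := by
      ext θ
      simp [rf_apply, sub_mul]
    rw [this]
    exact rf_norm_le _ _
  exact this.continuous

lemma exists_mean (d : ℕ) : ∃ m : C(TT d, ℝ) →L[ℝ] ℝ,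
    (∀ h, m h = ((2 * Real.pi) ^ d)⁻¹ *
      ∫ ψ in Set.Icc (0 : Fin d → ℝ) (fun _ => 2 * Real.pi), h (pr ψ)) ∧
    (∀ h, ‖m h‖ ≤ ‖h‖) ∧ (∀ c : ℝ, m (ContinuousMap.const (TT d) c) = c) := by
  have hIntg : ∀ h : C(TT d, ℝ), IntegrableOn (fun ψ => h (pr ψ))
      (Set.Icc (0 : Fin d → ℝ) (fun _ => 2 * Real.pi)) := fun h =>
    (h.continuous.comp pr_continuous).integrableOn_Icc
  have hpi : (0 : ℝ) < 2 * Real.pi := by positivity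
  have hvol : volume.real (Set.Icc (0 : Fin d → ℝ) (fun _ => 2 * Real.pi))
      = (2 * Real.pi) ^ d := by
    have h0 : (0 : Fin d → ℝ) ≤ fun _ => 2 * Real.pi := fun _ => hpi.le
    have h1 := Real.volume_Icc_pi_toReal h0
    rw [Measure.real]
    refine h1.trans ?_
    simp
  let L : C(TT d, ℝ) →ₗ[ℝ] ℝ :=
    { toFun := fun h => ((2 * Real.pi) ^ d)⁻¹ *
        ∫ ψ in Set.Icc (0 : Fin d → ℝ) (fun _ => 2 * Real.pi), h (pr ψ)
      map_add' := by
        intro h1 h2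
        simp only [ContinuousMap.add_apply]
        rw [integral_add (hIntg h1) (hIntg h2)]
        ring
      map_smul' := by
        intro c h
        simp only [ContinuousMap.smul_apply, smul_eq_mul, RingHom.id_apply]
        rw [integral_const_mul]
        ring }
  have hb : ∀ h, ‖L h‖ ≤ 1 * ‖h‖ := by
    intro h
    have h1 : ‖∫ ψ in Set.Icc (0 : Fin d → ℝ) (fun _ => 2 * Real.pi), h (pr ψ)‖
        ≤ ‖h‖ * volume.real (Set.Icc (0 : Fin d → ℝ) (fun _ => 2 * Real.pi)) :=
      norm_setIntegral_le_of_norm_le_const (isCompact_Icc.measure_lt_top)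
        (fun ψ _ => h.norm_coe_le_norm _)
    rw [hvol] at h1
    change ‖((2 * Real.pi) ^ d)⁻¹ * _‖ ≤ _
    rw [norm_mul, norm_inv, norm_pow, Real.norm_eq_abs, abs_of_pos hpi, one_mul]
    rw [inv_mul_le_iff₀ (by positivity)]
    linarith
  refine ⟨L.mkContinuous 1 hb, fun h => rfl, fun h => by simpa using hb h, fun c => ?_⟩
  change ((2 * Real.pi) ^ d)⁻¹ * ∫ ψ in Set.Icc (0 : Fin d → ℝ) (fun _ => 2 * Real.pi), c = c
  rw [setIntegral_const, hvol, smul_eq_mul]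
  field_simp

/-- Real part as a continuous linear map. -/
lemma exists_re (d : ℕ) : ∃ re : C(TT d, ℂ) → C(TT d, ℝ), (∀ H θ, re H θ = (H θ).re) ∧
    (∀ H H', re (H + H') = re H + re H') ∧ (∀ H, ‖re H‖ ≤ ‖H‖) := by
  refine ⟨fun H => ⟨fun θ => (H θ).re, by fun_prop⟩, fun _ _ => rfl, fun H H' => ?_, fun H => ?_⟩
  · ext θ; simp
  · refine (ContinuousMap.norm_le _ (norm_nonneg _)).2 fun θ => ?_
    exact (Complex.abs_re_le_norm _).trans (H.norm_coe_le_norm θ)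

lemma dense_rf (p : C(TT d, ℝ) → Prop) (h0 : p 0) (hadd : ∀ x y, p x → p y → p (x + y))
    (hrf : ∀ c ν, p (rf c ν)) (h : C(TT d, ℝ)) {δ : ℝ} (hδ : 0 < δ) :
    ∃ x, p x ∧ ‖h - x‖ < δ := by
  obtain ⟨re, hre, hreadd, hren⟩ := exists_re d
  let H : C(TT d, ℂ) := ⟨fun θ => (h θ : ℂ), by fun_prop⟩
  have hH : H ∈ (Submodule.span ℂ
      (Set.range (UnitAddTorus.mFourier (d := Fin d)))).topologicalClosure := by
    rw [UnitAddTorus.span_mFourier_closure_eq_top]; trivial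
  have hH2 : H ∈ closure ((Submodule.span ℂ
      (Set.range (UnitAddTorus.mFourier (d := Fin d))) : Set C(TT d, ℂ))) := hH
  obtain ⟨G, hG, hGd⟩ := Metric.mem_closure_iff.1 hH2 δ hδ
  refine ⟨re G, ?_, ?_⟩
  · refine Submodule.closure_induction (p := fun G _ => p (re G)) ?_ ?_ ?_ hG
    · have : re 0 = 0 := by ext θ; simp [hre]
      rw [this]; exact h0
    · intro x y _ _ hx hy
      rw [hreadd]; exact hadd _ _ hx hy
    · rintro c _ ⟨ν, rfl⟩
      have : re (c • UnitAddTorus.mFourier ν) = rf c ν := by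
        ext θ; rw [hre, rf_apply]; simp
      rw [this]; exact hrf c ν
  · have : h - re G = re (H - G) := by
      ext θ; simp [hre, H]
    rw [this]
    refine (hren _).trans_lt ?_
    rwa [← dist_eq_norm]

lemma strong_continuity (ω : Fin d → ℝ)
    (hω : ∀ ν : Fin d → ℤ, ν ≠ 0 → (∑ i, ω i * (ν i : ℝ)) ≠ 0) (a : ℝ)
    (m : C(TT d, ℝ) →L[ℝ] ℝ) (hm1 : ∀ h, ‖m h‖ ≤ ‖h‖)
    (hm : ∀ c : ℝ, m (ContinuousMap.const (TT d) c) = c)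
    (M : ℝ → C(TT d, ℝ) →L[ℝ] C(TT d, ℝ)) (S : Set ℝ) (C : ℝ) (hC : 0 < C)
    (hMC : ∀ ε ∈ S, ∀ h, ‖M ε h‖ ≤ C * ‖h‖)
    (hMr : ∀ ε ∈ S, ∀ c ν, M ε (rf c ν) = rf (c * (ε / (Complex.I * (∑ i, ω i * (ν i : ℝ) : ℝ)
        + ε * (a - (∑ i, ω i * (ν i : ℝ) : ℝ) ^ 2)))) ν) (h : C(TT d, ℝ)) :
    ContinuousOn (fun ε => M ε h - ContinuousMap.const (TT d) (m (M ε h))) S := by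
  have hP : ∀ v : C(TT d, ℝ), ‖v - ContinuousMap.const (TT d) (m v)‖ ≤ 2 * ‖v‖ := by
    intro v
    refine (norm_sub_le _ _).trans ?_
    have : ‖ContinuousMap.const (TT d) (m v)‖ ≤ ‖v‖ :=
      (ContinuousMap.norm_le _ (norm_nonneg _)).2 fun _ => hm1 v
    linarith
  have hcc : Continuous fun c : ℝ => ContinuousMap.const (TT d) c :=
    ContinuousMap.continuous_const'
  have hPc : Continuous fun v : C(TT d, ℝ) => v - ContinuousMap.const (TT d) (m v) :=
    continuous_id.sub (hcc.comp m.continuous)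
  have hadd : ∀ x y : C(TT d, ℝ),
      x + y - ContinuousMap.const (TT d) (m (x + y))
        = (x - ContinuousMap.const (TT d) (m x)) + (y - ContinuousMap.const (TT d) (m y)) := by
    intro x y; ext θ; simp; ring
  have hsub : ∀ x y : C(TT d, ℝ),
      (x - ContinuousMap.const (TT d) (m x)) - (y - ContinuousMap.const (TT d) (m y)) =
      (x - y) - ContinuousMap.const (TT d) (m (x - y)) := by
    intro x y; ext θ; simp; ring
  refine continuousOn_of_uniform_approx_of_continuousOn fun u hu => ?_
  obtain ⟨δ, hδ, hδu⟩ := Metric.mem_uniformity_dist.1 hu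
  obtain ⟨x, hx, hxd⟩ := dense_rf
    (fun h => ContinuousOn (fun ε => M ε h - ContinuousMap.const (TT d) (m (M ε h))) S)
    (by
      have : (fun ε => M ε 0 - ContinuousMap.const (TT d) (m (M ε 0))) = fun _ => 0 := by
        funext ε; ext θ; simp
      rw [this]; exact continuousOn_const)
    (by
      intro x y hx hy
      simp only [map_add (M _), hadd]
      exact hx.add hy)
    (by
      intro c ν
      by_cases hν : ν = 0
      · subst hν
        refine continuousOn_const (c := (0 : C(TT d, ℝ))).congr fun ε hε => ?_
        have h1 := hMr ε hε c 0
        change M ε (rf c 0) - ContinuousMap.const (TT d) (m (M ε (rf c 0))) = 0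
        rw [h1, rf_zero, hm, sub_self]
      · have hσ := hω ν hν
        set σ : ℝ := ∑ i, ω i * (ν i : ℝ)
        have hne : ∀ ε : ℝ, (Complex.I * σ + ε * (a - (σ : ℂ) ^ 2) : ℂ) ≠ 0 := by
          intro ε h0
          have := congrArg Complex.im h0
          have h2 : (Complex.I * σ + ε * (a - (σ : ℂ) ^ 2) : ℂ)
              = Complex.I * σ + ((ε * (a - σ ^ 2) : ℝ) : ℂ) := by push_cast; ring
          rw [h2, Complex.add_im, Complex.ofReal_im, Complex.mul_im, Complex.ofReal_im,
            Complex.I_im, Complex.ofReal_re, Complex.I_re, Complex.zero_im] at this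
          simp only [mul_zero, one_mul, zero_add, add_zero] at this
          exact hσ this
        have hc : Continuous fun ε : ℝ => c * ((ε : ℂ) / (Complex.I * σ + ε * (a - (σ : ℂ) ^ 2))) :=
          continuous_const.mul (Complex.continuous_ofReal.div (by fun_prop) hne)
        refine (hPc.comp ((rf_continuous ν).comp hc)).continuousOn.congr fun ε hε => ?_
        simp only [hMr ε hε]
        rfl)
    h (δ := δ / (2 * C)) (by positivity)
  refine ⟨_, hx, fun ε hε => hδu ?_⟩
  rw [dist_eq_norm, hsub, ← map_sub]
  refine (hP _).trans_lt ?_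
  have h1 := hMC ε hε (h - x)
  have h2 : C * ‖h - x‖ < C * (δ / (2 * C)) := by gcongr
  have h3 : C * (δ / (2 * C)) = δ / 2 := by field_simp
  linarith

lemma solution_analytic (M : C(TT d, ℝ) →L[ℝ] C(TT d, ℝ))
    (hcomm : ∀ x h, M (tr x h) = tr x (M h))
    (F : C(TT d, ℝ)) (hF : AnalyticAt ℝ (fun ψ : Fin d → ℝ => tr ψ F) 0)
    (N : C(TT d, ℝ) → C(TT d, ℝ)) (K : NNReal) (hN : LipschitzWith K N)
    (hNcomm : ∀ x u, N (tr x u) = tr x (N u))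
    (C : ℝ) (hC : 0 ≤ C) (hM : ‖M‖ ≤ C) (hK : C * K < 1)
    (u : C(TT d, ℝ)) (hNa : AnalyticAt ℝ N u) (c : ℝ)
    (hu : u = M (F - N u) - ContinuousMap.const (TT d) c) (ψ : Fin d → ℝ) :
    AnalyticAt ℝ (fun x => u (pr x)) ψ := by
  set Ψ : C(TT d, ℝ) → C(TT d, ℝ) := fun v => v + M (N v) with hΨ
  have hΨa : AnalyticAt ℝ Ψ u := analyticAt_id.add ((M.analyticAt _).comp hNa)
  set D := fderiv ℝ N u with hD
  have hDK : ‖D‖ ≤ K := norm_fderiv_le_of_lipschitz ℝ hN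
  have hlt : ‖-(M.comp D)‖ < 1 := by
    rw [ContinuousLinearMap.opNorm_neg]
    refine (M.opNorm_comp_le D).trans_lt ?_
    refine (mul_le_mul hM hDK D.opNorm_nonneg hC).trans_lt hK
  let e' : C(TT d, ℝ) ≃L[ℝ] C(TT d, ℝ) :=
    ContinuousLinearEquiv.unitsEquiv ℝ _ (Units.oneSub (-(M.comp D)) hlt)
  have he' : (e' : C(TT d, ℝ) →L[ℝ] C(TT d, ℝ)) = ContinuousLinearMap.id ℝ _ + M.comp D := by
    ext1 v
    change (1 - (-(M.comp D))) v = _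
    simp
  have hder : HasFDerivAt Ψ (e' : C(TT d, ℝ) →L[ℝ] C(TT d, ℝ)) u := by
    rw [he']
    exact (hasFDerivAt_id u).add (M.hasFDerivAt.comp u hNa.differentiableAt.hasFDerivAt)
  have hstrict : HasStrictFDerivAt Ψ (e' : C(TT d, ℝ) →L[ℝ] C(TT d, ℝ)) u := by
    have := hΨa.hasStrictFDerivAt
    rwa [hder.fderiv] at this
  let e := hstrict.toOpenPartialHomeomorph Ψ
  have hsymm : AnalyticAt ℝ e.symm (Ψ u) :=
    e.analyticAt_symm' (i := e') hstrict.mem_toOpenPartialHomeomorph_source hΨa hder.fderiv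
  have hw : ∀ x, Ψ (tr x u) = M (tr x F) - ContinuousMap.const (TT d) c := by
    intro x
    have h1 : tr x u = tr x (M (F - N u)) - ContinuousMap.const (TT d) c := by
      conv_lhs => rw [hu]
      rfl
    simp only [hΨ, hNcomm, hcomm]
    rw [h1, map_sub, map_sub]
    abel
  have htr0 : tr 0 u = u := by
    ext θ; rw [tr_apply, pr_zero, add_zero]
  have hγ : AnalyticAt ℝ (fun x => tr x u) 0 := by
    have h1 : AnalyticAt ℝ (fun x => M (tr x F) - ContinuousMap.const (TT d) c) 0 :=
      ((M.analyticAt _).comp hF).sub analyticAt_const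
    have h2 : AnalyticAt ℝ (fun x => e.symm (M (tr x F) - ContinuousMap.const (TT d) c)) 0 := by
      refine AnalyticAt.comp_of_eq hsymm h1 ?_
      rw [← hw, htr0]
    refine h2.congr ?_
    have hmem : ∀ᶠ x in nhds (0 : Fin d → ℝ), tr x u ∈ e.source := by
      refine (tr_continuous u).continuousAt.eventually_mem (e.open_source.mem_nhds ?_)
      rw [htr0]
      exact hstrict.mem_toOpenPartialHomeomorph_source
    filter_upwards [hmem] with x hx
    rw [← hw]
    exact e.left_inv hx
  have h3 : AnalyticAt ℝ (fun x : Fin d → ℝ => tr (x - ψ) u) ψ :=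
    AnalyticAt.comp_of_eq hγ (analyticAt_id.sub analyticAt_const) (by simp)
  have h4 := ((ContinuousMap.evalCLM ℝ (pr ψ) : C(TT d, ℝ) →L[ℝ] ℝ).analyticAt _).comp h3
  refine h4.congr (Eventually.of_forall fun x => ?_)
  change u (pr ψ + pr (x - ψ)) = u (pr x)
  rw [← pr_add, add_sub_cancel]

lemma exists_cutoff (g : ℝ → ℝ) (c₀ : ℝ) (hg : AnalyticAt ℝ g c₀) (ha : deriv g c₀ ≠ 0) :
    ∃ (n : ℝ → ℝ) (K : NNReal) (ρ : ℝ), (K : ℝ) = |deriv g c₀| / 8 ∧ 0 < ρ ∧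
      LipschitzWith K n ∧ (∀ x, |x| < ρ → n x = g (c₀ + x) - deriv g c₀ * x) ∧
      ∃ (p : FormalMultilinearSeries ℝ ℝ ℝ) (r : ENNReal), HasFPowerSeriesOnBall n p 0 r ∧ ENNReal.ofReal ρ < r := by
  set a := deriv g c₀ with haa
  set n₀ : ℝ → ℝ := fun x => g (c₀ + x) - a * x with hn₀
  have hn₀a : AnalyticAt ℝ n₀ 0 := by
    have h1 : AnalyticAt ℝ (fun x => g (c₀ + x)) 0 :=
      AnalyticAt.comp_of_eq hg (analyticAt_const.add analyticAt_id) (by simp)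
    exact h1.sub (analyticAt_const.mul analyticAt_id)
  have hd0 : HasDerivAt n₀ 0 0 := by
    have h1 : HasDerivAt g a (c₀ + 0) := by
      rw [add_zero]; exact hg.differentiableAt.hasDerivAt
    have h2 : HasDerivAt (fun x => g (c₀ + x)) a 0 := HasDerivAt.comp_const_add c₀ 0 h1
    have h3 : HasDerivAt n₀ (a - a * 1) 0 := h2.sub ((hasDerivAt_id (0 : ℝ)).const_mul a)
    rwa [mul_one, sub_self] at h3
  have hs : HasStrictFDerivAt n₀ (0 : ℝ →L[ℝ] ℝ) 0 := by
    have h1 := hn₀a.hasStrictFDerivAt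
    have h2 : fderiv ℝ n₀ 0 = 0 := by
      have := hd0.hasFDerivAt.fderiv
      rw [this]; ext; simp
    rwa [h2] at h1
  let K : NNReal := ⟨|a| / 8, by positivity⟩
  have hK : (K : ℝ) = |a| / 8 := rfl
  have hKpos : (0 : NNReal) < K := by
    rw [← NNReal.coe_pos, hK]; positivity
  obtain ⟨s, hs0, hsl⟩ := hs.exists_lipschitzOnWith_of_nnnorm_lt K (by simpa using hKpos)
  obtain ⟨n, hnl, hne⟩ := hsl.extend_real
  have hev : n₀ =ᶠ[nhds 0] n := by
    filter_upwards [hs0] with x hx using hne hx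
  obtain ⟨p, r, hp⟩ := hn₀a.congr hev
  obtain ⟨ρ₁, hρ₁, hb⟩ := Metric.mem_nhds_iff.1 hs0
  obtain ⟨q, hq0, hqr⟩ := ENNReal.lt_iff_exists_nnreal_btwn.1 hp.r_pos
  have hq0' : (0 : ℝ) < q := by exact_mod_cast hq0
  refine ⟨n, K, min ρ₁ q, hK, lt_min hρ₁ hq0', hnl, fun x hx => ?_, p, r, hp, ?_⟩
  · refine (hne (hb ?_)).symm
    rw [mem_ball_zero_iff]
    exact hx.trans_le (min_le_left _ _)
  · refine lt_of_le_of_lt ?_ hqr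
    refine (ENNReal.ofReal_le_ofReal (min_le_right _ _)).trans ?_
    simp

lemma exists_family (ω : Fin d → ℝ) {a : ℝ} (ha : a ≠ 0) :
    ∃ (ε0 : ℝ) (M : ℝ → C(TT d, ℝ) →L[ℝ] C(TT d, ℝ)), 0 < ε0 ∧ M 0 = 0 ∧
      ∀ ε, |ε| < ε0 → ‖M ε‖ ≤ 1 / |a| ∧
      (∀ x h, M ε (tr x h) = tr x (M ε h)) ∧
      (∀ c ν, M ε (rf c ν) = rf (c * (ε / (Complex.I * (∑ i, ω i * (ν i : ℝ) : ℝ)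
        + ε * (a - (∑ i, ω i * (ν i : ℝ) : ℝ) ^ 2)))) ν) ∧
      (ε ≠ 0 → ∀ h, ∃ y₁ y₂ : ℝ → ℝ,
        (∀ t, HasDerivAt (fun t => M ε h (pr (t • ω))) (y₁ t) t) ∧
        (∀ t, HasDerivAt y₁ (y₂ t) t) ∧
        ∀ t, ε * y₂ t + y₁ t + ε * a * M ε h (pr (t • ω)) = ε * h (pr (t • ω))) := by
  have key : ∀ ε : ℝ, ∃ M : C(TT d, ℝ) →L[ℝ] C(TT d, ℝ), (ε = 0 → M = 0) ∧
      (|ε| < 1 / (2 * (1 + |a|)) → ‖M‖ ≤ 1 / |a| ∧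
      (∀ x h, M (tr x h) = tr x (M h)) ∧
      (∀ c ν, M (rf c ν) = rf (c * (ε / (Complex.I * (∑ i, ω i * (ν i : ℝ) : ℝ)
        + ε * (a - (∑ i, ω i * (ν i : ℝ) : ℝ) ^ 2)))) ν) ∧
      (ε ≠ 0 → ∀ h, ∃ y₁ y₂ : ℝ → ℝ,
        (∀ t, HasDerivAt (fun t => M h (pr (t • ω))) (y₁ t) t) ∧
        (∀ t, HasDerivAt y₁ (y₂ t) t) ∧
        ∀ t, ε * y₂ t + y₁ t + ε * a * M h (pr (t • ω)) = ε * h (pr (t • ω)))) := by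
    intro ε
    by_cases hε : ε = 0
    · subst hε
      refine ⟨0, fun _ => rfl, fun _ => ⟨?_, ?_, ?_, fun h => absurd rfl h⟩⟩
      · rw [ContinuousLinearMap.opNorm_zero]; positivity
      · intro x h; simp
      · intro c ν
        ext θ
        simp [rf_apply]
    · by_cases hlt : |ε| < 1 / (2 * (1 + |a|))
      · have h4 : 4 * ε ^ 2 * a < 1 := by
          have hpos : 0 < 2 * (1 + |a|) := by positivity
          rw [lt_div_iff₀ hpos] at hlt
          have h5 : (|ε| * (2 * (1 + |a|))) ^ 2 < 1 := by
            have h0 : 0 ≤ |ε| * (2 * (1 + |a|)) := by positivity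
            nlinarith
          have h6 : (|ε| * (2 * (1 + |a|))) ^ 2 = 4 * ε ^ 2 * (1 + |a|) ^ 2 := by
            rw [mul_pow, sq_abs]; ring
          have h7 : a ≤ (1 + |a|) ^ 2 := by
            nlinarith [le_abs_self a, abs_nonneg a]
          have h8 : 4 * ε ^ 2 * a ≤ 4 * ε ^ 2 * (1 + |a|) ^ 2 := by gcongr
          linarith
        obtain ⟨M, h1, h2, h3, h5⟩ := exists_M ω ha hε h4
        exact ⟨M, fun h => absurd h hε, fun _ => ⟨h1, h2, h3, fun _ => h5⟩⟩
      · exact ⟨0, fun _ => rfl, fun h => absurd h hlt⟩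
  choose M hM0 hM using key
  exact ⟨_, M, by positivity, hM0 0 rfl, hM⟩

/-- The fixed point of a contraction of ratio at most `1/4`, with an a posteriori bound. -/
lemma exists_fixed {X : Type*} [NormedAddCommGroup X] [CompleteSpace X] (T : X → X)
    (hT : ∀ u v, ‖T u - T v‖ ≤ 1 / 4 * ‖u - v‖) :
    ∃ u, T u = u ∧ ∀ v, ‖u - v‖ ≤ 2 * ‖T v - v‖ := by
  have hc : ContractingWith (1 / 4) T := by
    refine ⟨by rw [← NNReal.coe_lt_coe]; norm_num, LipschitzWith.of_dist_le_mul fun u v => ?_⟩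
    rw [dist_eq_norm, dist_eq_norm]
    simpa using hT u v
  refine ⟨hc.fixedPoint, hc.fixedPoint_isFixedPt, fun v => ?_⟩
  have h1 : T hc.fixedPoint = hc.fixedPoint := hc.fixedPoint_isFixedPt
  set u := hc.fixedPoint
  have h2 : ‖u - v‖ ≤ ‖T u - T v‖ + ‖T v - v‖ := by
    have : u - v = (T u - T v) + (T v - v) := by rw [h1]; abel
    rw [this]; exact norm_add_le _ _
  have h3 := hT u v
  have h4 := norm_nonneg (u - v)
  linarith
end Torus

end RangeEq

open RangeEq

/-- **Solvability of the range equation together with continuity in `ε` at `ε = 0`.**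
In the setting of the range equation (nonresonant `ω`, analytic periodic `f` with mean
`f₀`, analytic `g`, `g(c₀) = f₀`, `g'(c₀) ≠ 0`), the solution `u(·, ε, ζ)` can be chosen
so that, in addition, for every fixed `|ζ| < ζ̄` the map `ε ↦ u(·, ε, ζ)` is continuous
from `[0, ε̄)` into the bounded continuous functions with the sup norm (expressed here as
uniform convergence `u(·, ε, ζ) → u(·, ε₁, ζ)` as `ε → ε₁` within `[0, ε̄)`), with
`u(·, 0, ζ) = 0`; in particular `sup |u(·, ε, ζ)| → 0` as `ε → 0⁺`. -/
theorem range_equation_solvable_continuous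
    (d : ℕ) (hd : 1 ≤ d) (ω : Fin d → ℝ)
    (hω : ∀ ν : Fin d → ℤ, ν ≠ 0 → (∑ i, ω i * (ν i : ℝ)) ≠ 0)
    (f : (Fin d → ℝ) → ℝ) (g : ℝ → ℝ)
    (hf : ∀ ψ : Fin d → ℝ, AnalyticAt ℝ f ψ)
    (hfper : ∀ (ψ : Fin d → ℝ) (i : Fin d), f (ψ + Pi.single i (2 * Real.pi)) = f ψ)
    (hg : ∀ x : ℝ, AnalyticAt ℝ g x)
    (f₀ : ℝ)
    (hf₀ : f₀ = ((2 * Real.pi) ^ d)⁻¹ *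
      ∫ ψ in Set.Icc (0 : Fin d → ℝ) (fun _ => 2 * Real.pi), f ψ)
    (c₀ : ℝ) (hzero : g c₀ = f₀) (ha : deriv g c₀ ≠ 0) :
    ∃ εb > (0 : ℝ), ∃ ζb > (0 : ℝ),
      ∃ (u : ℝ → ℝ → (Fin d → ℝ) → ℝ) (R : ℝ → ℝ → ℝ),
        (∀ ε : ℝ, 0 < |ε| → |ε| < εb → ∀ ζ : ℝ, |ζ| < ζb →
          (∀ ψ : Fin d → ℝ, AnalyticAt ℝ (u ε ζ) ψ) ∧
          (∀ (ψ : Fin d → ℝ) (i : Fin d),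
            u ε ζ (ψ + Pi.single i (2 * Real.pi)) = u ε ζ ψ) ∧
          (((2 * Real.pi) ^ d)⁻¹ *
            ∫ ψ in Set.Icc (0 : Fin d → ℝ) (fun _ => 2 * Real.pi), u ε ζ ψ) = 0 ∧
          (∀ t : ℝ,
            ε * deriv (deriv (fun s : ℝ => c₀ + ζ + u ε ζ (s • ω))) t
              + deriv (fun s : ℝ => c₀ + ζ + u ε ζ (s • ω)) t
              + ε * g (c₀ + ζ + u ε ζ (t • ω))
              = ε * f (t • ω) + ε * R ε ζ)) ∧
        (∀ ζ : ℝ, |ζ| < ζb →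
          u 0 ζ = 0 ∧
          ∀ ε₁ ∈ Set.Ico (0 : ℝ) εb,
            TendstoUniformly (fun ε : ℝ => u ε ζ) (u ε₁ ζ)
              (nhdsWithin ε₁ (Set.Ico (0 : ℝ) εb))) := by
  have hfc : Continuous f := continuous_iff_continuousAt.2 fun x => (hf x).continuousAt
  obtain ⟨F, hF⟩ := exists_desc f hfc hfper
  have hFa := tr_analyticAt f hf F hF
  obtain ⟨n, K, ρ, hK, hρ, hnl, hng, p, r, hp, hρr⟩ := exists_cutoff g c₀ (hg c₀) ha
  set a := deriv g c₀ with haa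
  have ha' : 0 < |a| := abs_pos.2 ha
  obtain ⟨ε0, M, hε0, hM0, hM⟩ := exists_family ω ha
  obtain ⟨m, hm, hm1, hmc⟩ := exists_mean d
  let n' : C(ℝ, ℝ) := ⟨n, hnl.continuous⟩
  let N : ℝ → C(TT d, ℝ) → C(TT d, ℝ) := fun ζ u => n'.comp (ContinuousMap.const (TT d) ζ + u)
  have hNapp : ∀ ζ u θ, N ζ u θ = n (ζ + u θ) := fun _ _ _ => rfl
  have hNl : ∀ ζ, LipschitzWith K (N ζ) := by
    intro ζ
    refine LipschitzWith.of_dist_le_mul fun u v => ?_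
    refine (ContinuousMap.dist_le (by positivity)).2 fun θ => ?_
    rw [hNapp, hNapp]
    refine (hnl.dist_le_mul _ _).trans ?_
    rw [dist_add_left]
    gcongr
    exact ContinuousMap.dist_apply_le_dist θ
  have hNcomm : ∀ ζ x u, N ζ (tr x u) = tr x (N ζ u) := by
    intro ζ x u
    ext θ
    rw [hNapp, tr_apply, tr_apply, hNapp]
  let P : C(TT d, ℝ) → C(TT d, ℝ) := fun v => v - ContinuousMap.const (TT d) (m v)
  have hPsub : ∀ v w, P v - P w = P (v - w) := by
    intro v w; ext θ; simp [P]; ring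
  have hPn : ∀ v, ‖P v‖ ≤ 2 * ‖v‖ := by
    intro v
    refine (norm_sub_le _ _).trans ?_
    have : ‖ContinuousMap.const (TT d) (m v)‖ ≤ ‖v‖ :=
      (ContinuousMap.norm_le _ (norm_nonneg _)).2 fun _ => hm1 v
    linarith
  have hPm : ∀ v, m (P v) = 0 := by
    intro v; simp only [P, map_sub, hmc, sub_self]
  have hMC : ∀ ε, |ε| < ε0 → ∀ h, ‖M ε h‖ ≤ 1 / |a| * ‖h‖ := by
    intro ε hε h
    refine ((M ε).le_opNorm h).trans ?_
    gcongr
    exact (hM ε hε).1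
  have hPMc : ∀ ε, |ε| < ε0 → ∀ c : ℝ, P (M ε (ContinuousMap.const (TT d) c)) = 0 := by
    intro ε hε c
    have h1 := (hM ε hε).2.2.1 (c : ℂ) 0
    rw [rf_zero, rf_zero, Complex.ofReal_re] at h1
    simp only [P]
    rw [h1, hmc, sub_self]
  have hT : ∀ ε, |ε| < ε0 → ∀ ζ u v,
      ‖P (M ε (F - N ζ u)) - P (M ε (F - N ζ v))‖ ≤ 1 / 4 * ‖u - v‖ := by
    intro ε hε ζ u v
    rw [hPsub, ← map_sub]
    have e1 : F - N ζ u - (F - N ζ v) = N ζ v - N ζ u := by abel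
    rw [e1]
    refine (hPn _).trans ?_
    have h1 := hMC ε hε (N ζ v - N ζ u)
    have h2 := (hNl ζ).dist_le_mul v u
    rw [dist_eq_norm, dist_eq_norm, hK, norm_sub_rev v u] at h2
    have h3 : 1 / |a| * ‖N ζ v - N ζ u‖ ≤ 1 / |a| * (|a| / 8 * ‖u - v‖) := by gcongr
    have h4 : 1 / |a| * (|a| / 8 * ‖u - v‖) = ‖u - v‖ / 8 := by field_simp
    linarith
  have key : ∀ ε ζ, ∃ u : C(TT d, ℝ), |ε| < ε0 →
      (P (M ε (F - N ζ u)) = u ∧ ∀ v, ‖u - v‖ ≤ 2 * ‖P (M ε (F - N ζ v)) - v‖) := by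
    intro ε ζ
    by_cases hε : |ε| < ε0
    · obtain ⟨u, h1, h2⟩ := exists_fixed (fun u => P (M ε (F - N ζ u))) (hT ε hε ζ)
      exact ⟨u, fun _ => ⟨h1, h2⟩⟩
    · exact ⟨0, fun h => absurd h hε⟩
  choose U hU using key
  have hSC : ∀ h, ContinuousOn (fun ε => P (M ε h)) {ε | |ε| < ε0} := fun h =>
    strong_continuity ω hω a m hm1 hmc M {ε | |ε| < ε0} (1 / |a|) (by positivity)
      hMC (fun ε hε => (hM ε hε).2.2.1) h
  have hopen : IsOpen {ε : ℝ | |ε| < ε0} := isOpen_lt continuous_abs continuous_const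
  have hPM0 : ∀ h, P (M 0 h) = 0 := by
    intro h; simp only [P, hM0]; ext θ; simp
  have h0mem : (0 : ℝ) ∈ {ε : ℝ | |ε| < ε0} := by simpa using hε0
  have hUbound : ∀ ε, |ε| < ε0 → ∀ ζ, ‖U ε ζ‖ ≤ 2 * ‖P (M ε F)‖ := by
    intro ε hε ζ
    have h1 := (hU ε ζ hε).2 0
    rw [sub_zero, sub_zero] at h1
    have h2 : N ζ 0 = ContinuousMap.const (TT d) (n ζ) := by
      ext θ; rw [hNapp]; simp
    rw [h2, map_sub, ← hPsub, hPMc ε hε, sub_zero] at h1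
    exact h1
  have hev : ∀ᶠ ε in nhds (0 : ℝ), ‖P (M ε F)‖ < ρ / 8 := by
    have h1 : ContinuousAt (fun ε => P (M ε F)) 0 := (hSC F).continuousAt (hopen.mem_nhds h0mem)
    have h2 : ContinuousAt (fun ε => ‖P (M ε F)‖) 0 := h1.norm
    refine h2.eventually_lt continuousAt_const ?_
    rw [hPM0, norm_zero]; positivity
  obtain ⟨ε1, hε1, hsmall⟩ := Metric.eventually_nhds_iff.1 hev
  have hlt0 : ∀ ε, |ε| < min ε0 ε1 → |ε| < ε0 := fun ε h => h.trans_le (min_le_left _ _)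
  have hUs : ∀ ε, |ε| < min ε0 ε1 → ∀ ζ θ, |U ε ζ θ| ≤ ρ / 4 := by
    intro ε hε ζ θ
    have h1 := hUbound ε (hlt0 ε hε) ζ
    have h2 : ‖P (M ε F)‖ < ρ / 8 := hsmall (by
      rw [Real.dist_eq, sub_zero]; exact hε.trans_le (min_le_right _ _))
    have h3 : |U ε ζ θ| ≤ ‖U ε ζ‖ := (U ε ζ).norm_coe_le_norm θ
    linarith
  refine ⟨min ε0 ε1, lt_min hε0 hε1, ρ / 2, by positivity,
    fun ε ζ ψ => U ε ζ (pr ψ), fun ε ζ => a * ζ - a * m (M ε (F - N ζ (U ε ζ))), ?_, ?_⟩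
  · intro ε hεpos hε ζ hζ
    have hεne : ε ≠ 0 := abs_pos.1 hεpos
    obtain ⟨hMn, hMcomm, -, hMode⟩ := hM ε (hlt0 ε hε)
    have hfix := (hU ε ζ (hlt0 ε hε)).1
    have hsz : ∀ θ, |ζ + U ε ζ θ| ≤ 3 * ρ / 4 := by
      intro θ
      have h1 := abs_add_le ζ (U ε ζ θ)
      have h2 := hUs ε hε ζ θ
      linarith
    refine ⟨?_, fun ψ i => congrArg (U ε ζ) (pr_single ψ i), ?_, ?_⟩
    · intro ψ
      refine solution_analytic (M ε) hMcomm F hFa (N ζ) K (hNl ζ) (hNcomm ζ) (1 / |a|)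
        (by positivity) hMn ?_ (U ε ζ) ?_ (m (M ε (F - N ζ (U ε ζ)))) hfix.symm ψ
      · rw [hK]
        have : 1 / |a| * (|a| / 8) = 1 / 8 := by field_simp
        rw [this]; norm_num
      · have h1 : AnalyticAt ℝ (fun v : C(TT d, ℝ) => n'.comp v)
            (ContinuousMap.const (TT d) ζ + U ε ζ) := by
          refine nem_analyticAt n' p 0 r hp _ (3 * ρ / 4) (by positivity) ?_ ?_
          · refine lt_of_le_of_lt (ENNReal.ofReal_le_ofReal ?_) hρr
            linarith
          · intro θ
            rw [sub_zero]
            exact hsz θ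
        exact AnalyticAt.comp_of_eq h1 (analyticAt_const.add analyticAt_id) rfl
    · rw [← hm, ← hfix, hPm]
    · intro t
      obtain ⟨y₁, y₂, hy₁, hy₂, hode⟩ := hMode hεne (F - N ζ (U ε ζ))
      set c := m (M ε (F - N ζ (U ε ζ))) with hc
      have hUe : ∀ θ, U ε ζ θ = M ε (F - N ζ (U ε ζ)) θ - c := by
        intro θ
        exact (congrArg (fun v : C(TT d, ℝ) => v θ) hfix).symm
      have hd1 : ∀ s, HasDerivAt (fun s : ℝ => c₀ + ζ + U ε ζ (pr (s • ω))) (y₁ s) s := by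
        intro s
        have h1 := ((hy₁ s).sub_const c).const_add (c₀ + ζ)
        refine h1.congr_of_eventuallyEq (Eventually.of_forall fun x => ?_)
        change c₀ + ζ + U ε ζ (pr (x • ω)) = c₀ + ζ + (M ε (F - N ζ (U ε ζ)) (pr (x • ω)) - c)
        rw [hUe]
      have hd2 : deriv (fun s : ℝ => c₀ + ζ + U ε ζ (pr (s • ω))) = y₁ :=
        funext fun s => (hd1 s).deriv
      rw [hd2, (hy₂ t).deriv]
      have h3 := hode t
      have h4 := hng (ζ + U ε ζ (pr (t • ω))) ((hsz _).trans_lt (by linarith))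
      have h5 : (F - N ζ (U ε ζ)) (pr (t • ω)) = f (t • ω) - n (ζ + U ε ζ (pr (t • ω))) := by
        rw [ContinuousMap.sub_apply, hF, hNapp]
      rw [h5, h4, ← add_assoc] at h3
      have h6 := hUe (pr (t • ω))
      have h7 : M ε (F - N ζ (U ε ζ)) (pr (t • ω)) = U ε ζ (pr (t • ω)) + c := by linarith
      rw [h7] at h3
      linear_combination h3
  · intro ζ hζ
    constructor
    · funext ψ
      have h1 := (hU 0 ζ (by simpa using hε0)).1
      rw [hPM0] at h1
      change U 0 ζ (pr ψ) = 0
      rw [← h1]; rfl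
    · intro ε₁ hε₁
      have hε₁' : |ε₁| < ε0 := hlt0 _ (by rw [abs_of_nonneg hε₁.1]; exact hε₁.2)
      rw [Metric.tendstoUniformly_iff]
      intro δ hδ
      set h₁ := F - N ζ (U ε₁ ζ) with hh₁
      have hc : ContinuousAt (fun ε => P (M ε h₁)) ε₁ :=
        (hSC h₁).continuousAt (hopen.mem_nhds hε₁')
      have hc2 : ∀ᶠ ε in nhds ε₁, dist (P (M ε h₁)) (P (M ε₁ h₁)) < δ / 2 :=
        Metric.tendsto_nhds.1 hc _ (by positivity)
      filter_upwards [mem_nhdsWithin_of_mem_nhds hc2, mem_nhdsWithin_of_mem_nhds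
        (hopen.mem_nhds hε₁')] with ε h2 h3 ψ
      have h4 := (hU ε ζ h3).2 (U ε₁ ζ)
      have h5 : P (M ε₁ h₁) = U ε₁ ζ := (hU ε₁ ζ hε₁').1
      rw [h5, dist_eq_norm] at h2
      rw [← hh₁] at h4
      rw [dist_comm]
      refine (ContinuousMap.dist_apply_le_dist (pr ψ)).trans_lt ?_
      rw [dist_eq_norm]
      linarith
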